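/- Let R₀ > 0 and ω ∈ ℝ. For 0 < r ≤ R₀ and ρ ∈ ℝ define a(r,ρ) := ρ² − r^{−4} + ω² r^{−2} and b(r,ρ) := −2ρ r^{−2} (the real and imaginary parts of the conjugated symbol p_φ(r,ρ) = (ρ − i r^{−2})² + ω²/r² with weight φ(r) = 1/r). Then (∂_ρ a)(r,ρ)·(∂_r b)(r,ρ) − (∂_r a)(r,ρ)·(∂_ρ b)(r,ρ) = 8ρ² r^{−3} + 8 r^{−7} − 4 ω² r^{−5}; in particular, on the characteristic set a = b = 0 (equivalently ρ = 0 and ω² = r^{−2}) this Poisson bracket equals 4 r^{−7} ≥ 4 R₀^{−7} > 0. -/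

import Mathlib

noncomputable section

/-- Real part of the conjugated symbol `p_φ(r,ρ) = (ρ − i r⁻²)² + ω²/r²`
with the radially decreasing Carleman weight `φ(r) = 1/r`. -/
def reSymb (ω r ρ : ℝ) : ℝ := ρ ^ 2 - r ^ (-4 : ℤ) + ω ^ 2 * r ^ (-2 : ℤ)

/-- Imaginary part of the conjugated symbol. -/
def imSymb (r ρ : ℝ) : ℝ := -2 * ρ * r ^ (-2 : ℤ)

/-- The Poisson bracket `{Re p_φ, Im p_φ} = ∂_ρ a · ∂_r b − ∂_r a · ∂_ρ b`. -/
def bracket (ω r ρ : ℝ) : ℝ :=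
  deriv (fun ρ' => reSymb ω r ρ') ρ * deriv (fun r' => imSymb r' ρ) r -
    deriv (fun r' => reSymb ω r' ρ) r * deriv (fun ρ' => imSymb r ρ') ρ

/-!
Conjugating `ρ² + V(r)` by a weight with derivative `ψ` gives `(ρ + i ψ)² + V`, whose real and
imaginary parts have Poisson bracket `4 (ρ² + ψ²) ψ' − 2 ψ V'`. The weight `1/r` has `ψ = −r⁻²`, and
the potential is `V = ω² r⁻²`. On the characteristic set `ρ = 0`, `V = ψ²`, the convexity of the
weight contributes `8 r⁻⁷` and the decay of the potential only `−4 r⁻⁷`.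
-/

/-- The Poisson bracket `{a, b} = ∂_ρ a · ∂_r b − ∂_r a · ∂_ρ b` of two functions of `(r, ρ)`,
with the position `r` as first argument and the momentum `ρ` as second. -/
def poissonBracket (a b : ℝ → ℝ → ℝ) (r ρ : ℝ) : ℝ :=
  deriv (a r) ρ * deriv (fun r' => b r' ρ) r - deriv (fun r' => a r' ρ) r * deriv (b r) ρ

/-- Real part of the symbol `(ρ + i ψ(r))² + V(r)`, that is, of `ρ² + V(r)` conjugated by a weight
whose derivative is `ψ`. -/
def reConjSymb (ψ V : ℝ → ℝ) (r ρ : ℝ) : ℝ := ρ ^ 2 - ψ r ^ 2 + V r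

/-- Imaginary part of the symbol `(ρ + i ψ(r))² + V(r)`; the potential `V` is real and does not
contribute. -/
def imConjSymb (ψ : ℝ → ℝ) (r ρ : ℝ) : ℝ := 2 * ρ * ψ r

section ConjSymb

variable {ψ V : ℝ → ℝ} {ψ' V' r : ℝ}

theorem hasDerivAt_reConjSymb_momentum (ψ V : ℝ → ℝ) (r ρ : ℝ) :
    HasDerivAt (reConjSymb ψ V r) (2 * ρ) ρ :=
  (((hasDerivAt_pow 2 ρ).sub_const (ψ r ^ 2)).add_const (V r)).congr_deriv (by simp)

theorem hasDerivAt_imConjSymb_momentum (ψ : ℝ → ℝ) (r ρ : ℝ) :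
    HasDerivAt (imConjSymb ψ r) (2 * ψ r) ρ :=
  (((hasDerivAt_id ρ).const_mul 2).mul_const (ψ r)).congr_deriv (by simp)

theorem hasDerivAt_reConjSymb_position (hψ : HasDerivAt ψ ψ' r) (hV : HasDerivAt V V' r) (ρ : ℝ) :
    HasDerivAt (fun r' => reConjSymb ψ V r' ρ) (-(2 * ψ r * ψ') + V') r :=
  (((hψ.pow 2).const_sub (ρ ^ 2)).add hV).congr_deriv (by simp)

theorem hasDerivAt_imConjSymb_position (hψ : HasDerivAt ψ ψ' r) (ρ : ℝ) :
    HasDerivAt (fun r' => imConjSymb ψ r' ρ) (2 * ρ * ψ') r :=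
  hψ.const_mul (2 * ρ)

theorem poissonBracket_reConjSymb_imConjSymb (hψ : HasDerivAt ψ ψ' r) (hV : HasDerivAt V V' r)
    (ρ : ℝ) :
    poissonBracket (reConjSymb ψ V) (imConjSymb ψ) r ρ =
      4 * (ρ ^ 2 + ψ r ^ 2) * ψ' - 2 * ψ r * V' := by
  rw [poissonBracket, (hasDerivAt_reConjSymb_momentum ψ V r ρ).deriv,
    (hasDerivAt_imConjSymb_position hψ ρ).deriv, (hasDerivAt_reConjSymb_position hψ hV ρ).deriv,
    (hasDerivAt_imConjSymb_momentum ψ r ρ).deriv]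
  ring

theorem reConjSymb_eq_zero_and_imConjSymb_eq_zero_iff (hψ : ψ r ≠ 0) (ρ : ℝ) :
    reConjSymb ψ V r ρ = 0 ∧ imConjSymb ψ r ρ = 0 ↔ ρ = 0 ∧ V r = ψ r ^ 2 := by
  have im_iff : imConjSymb ψ r ρ = 0 ↔ ρ = 0 := by simp [imConjSymb, hψ]
  rw [im_iff, and_comm]
  refine and_congr_right ?_
  rintro rfl
  rw [reConjSymb, zero_pow two_ne_zero, zero_sub, neg_add_eq_zero, eq_comm]

end ConjSymb

theorem zpow_le_zpow_left_of_nonpos₀ {K : Type*} [DivisionRing K] [LinearOrder K]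
    [IsStrictOrderedRing K] {n : ℤ} {a b : K}
    (hn : n ≤ 0) (ha : 0 < a) (hab : a ≤ b) : b ^ n ≤ a ^ n := by
  have inv_zpow_le : (b⁻¹) ^ (-n) ≤ (a⁻¹) ^ (-n) :=
    zpow_le_zpow_left₀ (neg_nonneg.mpr hn) (inv_nonneg.mpr (ha.le.trans hab)) (inv_anti₀ ha hab)
  simpa only [inv_zpow', neg_neg] using inv_zpow_le

section InverseWeight

variable {ω r : ℝ}

theorem reSymb_eq_reConjSymb (ω : ℝ) :
    reSymb ω = reConjSymb (fun r => -r ^ (-2 : ℤ)) (fun r => ω ^ 2 * r ^ (-2 : ℤ)) := by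
  funext r ρ
  have sq_zpow : (r ^ (-2 : ℤ)) ^ 2 = r ^ (-4 : ℤ) := by
    rw [← zpow_natCast, ← zpow_mul]
    norm_num
  rw [reSymb, reConjSymb, neg_sq, sq_zpow]

theorem imSymb_eq_imConjSymb : imSymb = imConjSymb (fun r => -r ^ (-2 : ℤ)) := by
  funext r ρ
  rw [imSymb, imConjSymb]
  ring

theorem bracket_eq (hr : r ≠ 0) (ω ρ : ℝ) :
    bracket ω r ρ =
      8 * ρ ^ 2 * r ^ (-3 : ℤ) + 8 * r ^ (-7 : ℤ) - 4 * ω ^ 2 * r ^ (-5 : ℤ) := by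
  have hasDerivAt_inv_sq : HasDerivAt (fun x : ℝ => x ^ (-2 : ℤ)) (-2 * r ^ (-3 : ℤ)) r := by
    simpa using hasDerivAt_zpow (-2) r (Or.inl hr)
  calc bracket ω r ρ
      = poissonBracket (reSymb ω) imSymb r ρ := rfl
    _ = 4 * (ρ ^ 2 + (-r ^ (-2 : ℤ)) ^ 2) * -(-2 * r ^ (-3 : ℤ)) -
          2 * -r ^ (-2 : ℤ) * (ω ^ 2 * (-2 * r ^ (-3 : ℤ))) := by
        rw [reSymb_eq_reConjSymb, imSymb_eq_imConjSymb,
          poissonBracket_reConjSymb_imConjSymb hasDerivAt_inv_sq.fun_neg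
            (hasDerivAt_inv_sq.const_mul (ω ^ 2))]
    _ = 8 * ρ ^ 2 * r ^ (-3 : ℤ) + 8 * r ^ (-7 : ℤ) - 4 * ω ^ 2 * r ^ (-5 : ℤ) := by
        field_simp
        ring

theorem reSymb_eq_zero_and_imSymb_eq_zero_iff (hr : r ≠ 0) (ω ρ : ℝ) :
    reSymb ω r ρ = 0 ∧ imSymb r ρ = 0 ↔ ρ = 0 ∧ ω ^ 2 = r ^ (-2 : ℤ) := by
  have hr2 : r ^ (-2 : ℤ) ≠ 0 := zpow_ne_zero _ hr
  rw [reSymb_eq_reConjSymb, imSymb_eq_imConjSymb,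
    reConjSymb_eq_zero_and_imConjSymb_eq_zero_iff (ψ := fun r => -r ^ (-2 : ℤ))
      (neg_ne_zero.mpr hr2), neg_sq, sq (r ^ _), mul_left_inj' hr2]

theorem bracket_zero_of_sq_eq (hr : r ≠ 0) (hω : ω ^ 2 = r ^ (-2 : ℤ)) :
    bracket ω r 0 = 4 * r ^ (-7 : ℤ) := by
  have zpow_mul_zpow : r ^ (-2 : ℤ) * r ^ (-5 : ℤ) = r ^ (-7 : ℤ) := (zpow_add₀ hr (-2) (-5)).symm
  rw [bracket_eq hr, hω, mul_assoc 4, zpow_mul_zpow]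
  ring

end InverseWeight

theorem stmt5 (R₀ : ℝ) (hR₀ : 0 < R₀) (ω : ℝ) :
    ∀ r : ℝ, 0 < r → r ≤ R₀ → ∀ ρ : ℝ,
      bracket ω r ρ =
          8 * ρ ^ 2 * r ^ (-3 : ℤ) + 8 * r ^ (-7 : ℤ) - 4 * ω ^ 2 * r ^ (-5 : ℤ) ∧
        (reSymb ω r ρ = 0 → imSymb r ρ = 0 →
          (ρ = 0 ∧ ω ^ 2 = r ^ (-2 : ℤ)) ∧
            bracket ω r ρ = 4 * r ^ (-7 : ℤ) ∧
            4 * r ^ (-7 : ℤ) ≥ 4 * R₀ ^ (-7 : ℤ) ∧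
            (0 : ℝ) < 4 * R₀ ^ (-7 : ℤ)) := by
  intro r hr hrR ρ
  refine ⟨bracket_eq hr.ne' ω ρ, fun hre him => ?_⟩
  obtain ⟨rfl, hω⟩ := (reSymb_eq_zero_and_imSymb_eq_zero_iff hr.ne' ω ρ).mp ⟨hre, him⟩
  have zpow_anti : R₀ ^ (-7 : ℤ) ≤ r ^ (-7 : ℤ) :=
    zpow_le_zpow_left_of_nonpos₀ (by norm_num) hr hrR
  exact ⟨⟨rfl, hω⟩, bracket_zero_of_sq_eq hr.ne' hω, by gcongr, by positivity⟩
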